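/- arXiv:2602.11109 — 2 statements merged into one kernel-verified Lean document; each statement's English description precedes it below -/
import Mathlib

section
/- Let H be a separable real Hilbert space, let T > 0 and N ∈ ℕ with N ≥ 1, set Δt := T/N and t_j := j·Δt, and let f : [0, T] → H satisfy ‖f(s) − f(t)‖ ≤ L·|s − t|^α for all s, t ∈ [0, T], for some constants L ≥ 0 and α ∈ (0, 1]. Let ξ_1, …, ξ_N be independent random variables on a probability space (Ω, F, P), each uniformly distributed on [0, 1]. Then E[‖∑_{j=1}^{N} Δt · f(t_{j−1} + ξ_j Δt) − ∫_0^T f(τ) dτ‖²] ≤ T · L² · Δt^{1 + 2α}. -/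
open MeasureTheory ProbabilityTheory

/-!
On each cell of the partition the one-point rule with a uniformly distributed node is an unbiased
estimator of the integral, so the cell errors are centred and, for pairwise independent nodes,
orthogonal in `L²`. Hence the mean squares of the cell errors add up, rather than their norms: with
`N` cells of length `Δt` and errors of size `L Δt^(1+α)` this gives `N (L Δt^(1+α))²`.
-/

theorem integral_norm_sq_sum_of_pairwise_indepFun {Ω ι H : Type*} {mΩ : MeasurableSpace Ω}
    {P : Measure Ω} [IsFiniteMeasure P] [NormedAddCommGroup H] [InnerProductSpace ℝ H]
    [CompleteSpace H] [MeasurableSpace H] [BorelSpace H] [Fintype ι] {X : ι → Ω → H}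
    (hX : ∀ i, MemLp (X i) 2 P) (hindep : Pairwise fun i j => IndepFun (X i) (X j) P)
    (hmean : ∀ i, ∫ ω, X i ω ∂P = 0) :
    ∫ ω, ‖∑ i, X i ω‖ ^ 2 ∂P = ∑ i, ∫ ω, ‖X i ω‖ ^ 2 ∂P := by
  have hinner : ∀ i j, Integrable (fun ω => inner ℝ (X i ω) (X j ω)) P := fun i j =>
    memLp_one_iff_integrable.mp <| (innerSL ℝ).memLp_of_bilin 1 (hX i) (hX j)
  have horth : ∀ i j, j ≠ i → ∫ ω, inner ℝ (X i ω) (X j ω) ∂P = 0 := fun i j hji => by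
    have hbilin := (hindep hji.symm).integral_bilin ((hX i).integrable one_le_two)
      ((hX j).integrable one_le_two) (innerSL ℝ)
    rwa [hmean i, hmean j, map_zero] at hbilin
  calc ∫ ω, ‖∑ i, X i ω‖ ^ 2 ∂P
      = ∫ ω, ∑ i, ∑ j, inner ℝ (X i ω) (X j ω) ∂P := by
        simp_rw [← real_inner_self_eq_norm_sq, sum_inner, inner_sum]
    _ = ∑ i, ∑ j, ∫ ω, inner ℝ (X i ω) (X j ω) ∂P := by
        rw [integral_finsetSum _ fun i _ => integrable_finsetSum _ fun j _ => hinner i j]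
        exact Finset.sum_congr rfl fun i _ => integral_finsetSum _ fun j _ => hinner i j
    _ = ∑ i, ∫ ω, inner ℝ (X i ω) (X i ω) ∂P :=
        Finset.sum_congr rfl fun i _ => Fintype.sum_eq_single i (horth i)
    _ = ∑ i, ∫ ω, ‖X i ω‖ ^ 2 ∂P := by simp_rw [real_inner_self_eq_norm_sq]

theorem ae_mem_of_hasLaw_restrict {Ω E : Type*} {_ : MeasurableSpace Ω} {_ : MeasurableSpace E}
    {P : Measure Ω} {μ : Measure E} {s : Set E} {X : Ω → E} (hs : MeasurableSet s)
    (hX : HasLaw X (μ.restrict s) P) : ∀ᵐ ω ∂P, X ω ∈ s :=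
  ae_of_ae_map hX.aemeasurable (hX.map_eq ▸ ae_restrict_mem hs)

theorem intervalIntegrable_comp_add_mul_sub {E : Type*} [NormedAddCommGroup E] {f : ℝ → E}
    {a b : ℝ} (hf : IntervalIntegrable f volume a b) :
    IntervalIntegrable (fun x => f (a + x * (b - a))) volume 0 1 := by
  obtain rfl | hab := eq_or_ne b a
  · simp
  · have hnode := (hf.comp_add_left a).comp_mul_right (c := b - a)
    rwa [sub_self, zero_div, div_self (sub_ne_zero.mpr hab)] at hnode

section CellError

variable {H : Type*} [NormedAddCommGroup H] [NormedSpace ℝ H] {f : ℝ → H} {a b : ℝ}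

/-- The error of the one-point quadrature rule for `∫ τ in a..b, f τ`, as a function of the relative
position `x ∈ [0, 1]` of the node in the cell `[a, b]`. -/
noncomputable def cellError (f : ℝ → H) (a b x : ℝ) : H :=
  (b - a) • f (a + x * (b - a)) - ∫ τ in a..b, f τ

theorem sum_cellError {n : ℕ} {t : ℕ → ℝ}
    (hf : ∀ j < n, IntervalIntegrable f volume (t j) (t (j + 1))) (x : Fin n → ℝ) :
    ∑ j : Fin n, cellError f (t j) (t (j + 1)) (x j)
      = (∑ j : Fin n, (t (j + 1) - t j) • f (t j + x j * (t (j + 1) - t j)))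
        - ∫ τ in t 0..t n, f τ := by
  rw [← intervalIntegral.sum_integral_adjacent_intervals hf, Finset.sum_range,
    ← Finset.sum_sub_distrib]
  rfl

theorem intervalIntegrable_cellError (hf : IntervalIntegrable f volume a b) :
    IntervalIntegrable (cellError f a b) volume 0 1 :=
  ((intervalIntegrable_comp_add_mul_sub hf).smul (b - a)).sub intervalIntegrable_const

theorem aestronglyMeasurable_cellError (hf : IntervalIntegrable f volume a b) :
    AEStronglyMeasurable (cellError f a b) (volume.restrict (Set.Icc 0 1)) :=
  ((intervalIntegrable_iff_integrableOn_Icc_of_le zero_le_one).mp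
    (intervalIntegrable_cellError hf)).aestronglyMeasurable

variable [CompleteSpace H]

theorem integral_cellError (hf : IntervalIntegrable f volume a b) :
    ∫ x in (0 : ℝ)..1, cellError f a b x = 0 := by
  have hnode : (b - a) • ∫ x in (0 : ℝ)..1, f (a + x * (b - a)) = ∫ τ in a..b, f τ := by
    simp_rw [mul_comm _ (b - a)]
    rw [intervalIntegral.smul_integral_comp_add_mul, mul_zero, mul_one, add_zero,
      add_sub_cancel]
  have hnodeInt : IntervalIntegrable (fun x => (b - a) • f (a + x * (b - a))) volume 0 1 :=
    (intervalIntegrable_comp_add_mul_sub hf).smul (b - a)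
  simp only [cellError]
  rw [intervalIntegral.integral_sub hnodeInt intervalIntegrable_const,
    intervalIntegral.integral_smul, hnode, intervalIntegral.integral_const, sub_zero, one_smul,
    sub_self]

theorem norm_cellError_le {C x : ℝ} (hab : a ≤ b) (hf : IntervalIntegrable f volume a b)
    (hosc : ∀ s ∈ Set.Icc a b, ∀ t ∈ Set.Icc a b, ‖f s - f t‖ ≤ C) (hx : x ∈ Set.Icc (0 : ℝ) 1) :
    ‖cellError f a b x‖ ≤ C * (b - a) := by
  have hlen : 0 ≤ b - a := sub_nonneg.mpr hab
  have hnode : a + x * (b - a) ∈ Set.Icc a b :=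
    ⟨le_add_of_nonneg_right (mul_nonneg hx.1 hlen),
      le_sub_iff_add_le'.mp (mul_le_of_le_one_left hlen hx.2)⟩
  calc ‖cellError f a b x‖ = ‖∫ τ in a..b, (f (a + x * (b - a)) - f τ)‖ := by
        rw [intervalIntegral.integral_sub intervalIntegrable_const hf,
          intervalIntegral.integral_const, cellError]
    _ ≤ C * |b - a| := by
        refine intervalIntegral.norm_integral_le_of_norm_le_const fun τ hτ => ?_
        rw [Set.uIoc_of_le hab] at hτ
        exact hosc _ hnode τ (Set.Ioc_subset_Icc_self hτ)
    _ = C * (b - a) := by rw [abs_of_nonneg hlen]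

variable {Ω : Type*} {mΩ : MeasurableSpace Ω} {P : Measure Ω} {U : Ω → ℝ}

theorem integral_cellError_comp (hU : HasLaw U (volume.restrict (Set.Icc 0 1)) P)
    (hf : IntervalIntegrable f volume a b) : ∫ ω, cellError f a b (U ω) ∂P = 0 := by
  have hlaw := hU.integral_comp (aestronglyMeasurable_cellError hf)
  rwa [integral_Icc_eq_integral_Ioc, ← intervalIntegral.integral_of_le zero_le_one,
    integral_cellError hf] at hlaw

theorem ae_norm_cellError_comp_le {C : ℝ} (hU : HasLaw U (volume.restrict (Set.Icc 0 1)) P)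
    (hab : a ≤ b) (hf : IntervalIntegrable f volume a b)
    (hosc : ∀ s ∈ Set.Icc a b, ∀ t ∈ Set.Icc a b, ‖f s - f t‖ ≤ C) :
    ∀ᵐ ω ∂P, ‖cellError f a b (U ω)‖ ≤ C * (b - a) :=
  (ae_mem_of_hasLaw_restrict measurableSet_Icc hU).mono fun _ => norm_cellError_le hab hf hosc

end CellError

section StratifiedQuadrature

variable {Ω H : Type*} {mΩ : MeasurableSpace Ω} {P : Measure Ω} [IsProbabilityMeasure P]
  [NormedAddCommGroup H] [InnerProductSpace ℝ H] [CompleteSpace H] {f : ℝ → H}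

theorem integral_norm_sq_stratified_error_le {n : ℕ} {t C : ℕ → ℝ} {ξ : Fin n → Ω → ℝ}
    (ht : Monotone t) (hf : ∀ j < n, IntervalIntegrable f volume (t j) (t (j + 1)))
    (hosc : ∀ j < n, ∀ x ∈ Set.Icc (t j) (t (j + 1)), ∀ y ∈ Set.Icc (t j) (t (j + 1)),
      ‖f x - f y‖ ≤ C j)
    (hξ : ∀ j, HasLaw (ξ j) (volume.restrict (Set.Icc 0 1)) P)
    (hindep : Pairwise fun i j => IndepFun (ξ i) (ξ j) P) :
    ∫ ω, ‖(∑ j : Fin n, (t (j + 1) - t j) • f (t j + ξ j ω * (t (j + 1) - t j)))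
        - ∫ τ in t 0..t n, f τ‖ ^ 2 ∂P
      ≤ ∑ j : Fin n, (C j * (t (j + 1) - t j)) ^ 2 := by
  borelize H
  let X : Fin n → Ω → H := fun j ω => cellError f (t j) (t (j + 1)) (ξ j ω)
  have hmeas : ∀ j : Fin n,
      AEStronglyMeasurable (cellError f (t j) (t (j + 1))) (P.map (ξ j)) := fun j =>
    (hξ j).map_eq ▸ aestronglyMeasurable_cellError (hf j j.2)
  have hbound : ∀ j : Fin n, ∀ᵐ ω ∂P, ‖X j ω‖ ≤ C j * (t (j + 1) - t j) := fun j =>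
    ae_norm_cellError_comp_le (hξ j) (ht (Nat.le_succ j)) (hf j j.2) (hosc j j.2)
  have hX : ∀ j, MemLp (X j) 2 P := fun j =>
    .of_bound ((hmeas j).comp_aemeasurable (hξ j).aemeasurable) _ (hbound j)
  have hXindep : Pairwise fun i j => IndepFun (X i) (X j) P := fun i j hij =>
    (hindep hij).comp₀ (hξ i).aemeasurable (hξ j).aemeasurable
      (hmeas i).aemeasurable (hmeas j).aemeasurable
  have hmean : ∀ j, ∫ ω, X j ω ∂P = 0 := fun j => integral_cellError_comp (hξ j) (hf j j.2)
  have hmoment : ∀ j : Fin n, ∫ ω, ‖X j ω‖ ^ 2 ∂P ≤ (C j * (t (j + 1) - t j)) ^ 2 := fun j => by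
    have hmono := integral_mono_ae ((hX j).integrable_norm_pow two_ne_zero)
      (integrable_const ((C j * (t (j + 1) - t j)) ^ 2))
      ((hbound j).mono fun ω hω => pow_le_pow_left₀ (norm_nonneg _) hω 2)
    simpa using hmono
  simp_rw [← sum_cellError hf]
  exact (integral_norm_sq_sum_of_pairwise_indepFun hX hXindep hmean).trans_le
    (Finset.sum_le_sum fun j _ => hmoment j)

theorem integral_norm_sq_uniform_stratified_error_le {T C : ℝ} {N : ℕ} {ξ : Fin N → Ω → ℝ}
    (hT : 0 ≤ T) (hN : N ≠ 0) (hf : IntervalIntegrable f volume 0 T)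
    (hosc : ∀ s ∈ Set.Icc 0 T, ∀ t ∈ Set.Icc 0 T, |s - t| ≤ T / N → ‖f s - f t‖ ≤ C)
    (hξ : ∀ j, HasLaw (ξ j) (volume.restrict (Set.Icc 0 1)) P)
    (hindep : Pairwise fun i j => IndepFun (ξ i) (ξ j) P) :
    ∫ ω, ‖(∑ j : Fin N, (T / N) • f ((j : ℝ) * (T / N) + ξ j ω * (T / N)))
        - ∫ τ in (0 : ℝ)..T, f τ‖ ^ 2 ∂P ≤ T * (T / N) * C ^ 2 := by
  let t : ℕ → ℝ := fun j => j * (T / N)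
  have hlen : ∀ j, t (j + 1) - t j = T / N := fun j => by simp only [t]; push_cast; ring
  have ht : Monotone t := fun i j hij => by dsimp only [t]; gcongr
  have ht₀ : t 0 = 0 := by simp [t]
  have htN : t N = T := by simp only [t]; field_simp
  have hsub : ∀ j < N, Set.Icc (t j) (t (j + 1)) ⊆ Set.Icc 0 T := fun j hj =>
    Set.Icc_subset_Icc (ht₀ ▸ ht (Nat.zero_le j)) ((ht hj).trans_eq htN)
  have hfcell : ∀ j < N, IntervalIntegrable f volume (t j) (t (j + 1)) := fun j hj => by
    refine hf.mono_set ?_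
    rw [Set.uIcc_of_le (ht (Nat.le_succ j)), Set.uIcc_of_le hT]
    exact hsub j hj
  have hosccell : ∀ j < N, ∀ x ∈ Set.Icc (t j) (t (j + 1)), ∀ y ∈ Set.Icc (t j) (t (j + 1)),
      ‖f x - f y‖ ≤ C := fun j hj x hx y hy =>
    hosc x (hsub j hj hx) y (hsub j hj hy) ((Real.dist_le_of_mem_Icc hx hy).trans_eq (hlen j))
  have herror := integral_norm_sq_stratified_error_le ht hfcell hosccell hξ hindep
  simp only [hlen, ht₀, htN] at herror
  refine herror.trans_eq ?_
  simp only [Finset.sum_const, Finset.card_univ, Fintype.card_fin, nsmul_eq_mul]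
  field_simp

end StratifiedQuadrature

theorem holderOnWith_of_norm_sub_le {E H : Type*} [PseudoMetricSpace E]
    [SeminormedAddCommGroup H] {f : E → H} {s : Set E} {L α : ℝ} (hL : 0 ≤ L) (hα : 0 ≤ α)
    (hf : ∀ x ∈ s, ∀ y ∈ s, ‖f x - f y‖ ≤ L * dist x y ^ α) :
    HolderOnWith L.toNNReal α.toNNReal f s := fun x hx y hy => by
  rw [edist_dist, edist_dist, ENNReal.ofReal_rpow_of_nonneg dist_nonneg NNReal.zero_le_coe,
    Real.coe_toNNReal α hα, dist_eq_norm (f x), ENNReal.ofNNReal_toNNReal, ← ENNReal.ofReal_mul hL]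
  exact ENNReal.ofReal_le_ofReal (hf x hx y hy)

theorem randomized_riemann_sum_holder_general {Ω H : Type*} {_ : MeasurableSpace Ω}
    {P : Measure Ω} [IsProbabilityMeasure P] [NormedAddCommGroup H] [InnerProductSpace ℝ H]
    [CompleteSpace H] {T : ℝ} (hT : 0 ≤ T) {N : ℕ} (hN : N ≠ 0) {f : ℝ → H} {L α : ℝ}
    (hL : 0 ≤ L) (hα : 0 < α)
    (hf : ∀ s ∈ Set.Icc (0 : ℝ) T, ∀ t ∈ Set.Icc (0 : ℝ) T, ‖f s - f t‖ ≤ L * |s - t| ^ α)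
    {ξ : Fin N → Ω → ℝ} (hξ : ∀ j, HasLaw (ξ j) (volume.restrict (Set.Icc 0 1)) P)
    (hindep : Pairwise fun i j => IndepFun (ξ i) (ξ j) P) :
    ∫ ω, ‖(∑ j : Fin N, (T / N) • f ((j : ℝ) * (T / N) + ξ j ω * (T / N)))
        - ∫ τ in (0 : ℝ)..T, f τ‖ ^ 2 ∂P
      ≤ T * L ^ 2 * (T / N) ^ (1 + 2 * α) := by
  have hΔ : 0 ≤ T / N := by positivity
  have hcont : ContinuousOn f (Set.Icc 0 T) :=
    (holderOnWith_of_norm_sub_le hL hα.le hf).continuousOn (Real.toNNReal_pos.mpr hα)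
  have hosc : ∀ s ∈ Set.Icc 0 T, ∀ t ∈ Set.Icc 0 T, |s - t| ≤ T / N →
      ‖f s - f t‖ ≤ L * (T / N) ^ α := fun s hs t ht hst =>
    (hf s hs t ht).trans (by gcongr)
  calc _ ≤ T * (T / N) * (L * (T / N) ^ α) ^ 2 :=
        integral_norm_sq_uniform_stratified_error_le hT hN (hcont.intervalIntegrable_of_Icc hT)
          hosc hξ hindep
    _ = T * L ^ 2 * (T / N) ^ (1 + 2 * α) := by
        rw [Real.rpow_add_of_nonneg hΔ zero_le_one (by positivity), Real.rpow_one, mul_comm 2 α,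
          Real.rpow_mul hΔ, Real.rpow_two]
        ring

/-- Stratified randomized Riemann-sum quadrature estimate for a Hölder
continuous integrand `f : [0,T] → H`: with independent uniform nodes
`t_{j-1} + ξ_j Δt`, the mean-square quadrature error is at most `T L² Δt^{1+2α}`. -/
theorem randomized_riemann_sum_holder
    {Ω H : Type*} {mΩ : MeasurableSpace Ω} (P : Measure Ω) [IsProbabilityMeasure P]
    [NormedAddCommGroup H] [InnerProductSpace ℝ H] [CompleteSpace H]
    [SecondCountableTopology H]
    (T : ℝ) (hT : 0 < T) (N : ℕ) (hN : 1 ≤ N)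
    (f : ℝ → H) (L α : ℝ) (hL : 0 ≤ L) (hα : α ∈ Set.Ioc (0:ℝ) 1)
    (hf : ∀ s ∈ Set.Icc (0:ℝ) T, ∀ t ∈ Set.Icc (0:ℝ) T, ‖f s - f t‖ ≤ L * |s - t| ^ α)
    (ξ : Fin N → Ω → ℝ) (hξmeas : ∀ j, Measurable (ξ j))
    (hξindep : iIndepFun ξ P)
    (hξunif : ∀ j, Measure.map (ξ j) P = (volume : Measure ℝ).restrict (Set.Icc 0 1)) :
    ∫ ω, ‖(∑ j : Fin N, (T / N) • f ((j : ℝ) * (T / N) + ξ j ω * (T / N)))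
        - ∫ τ in (0:ℝ)..T, f τ‖ ^ 2 ∂P
      ≤ T * L ^ 2 * (T / N) ^ (1 + 2 * α) :=
  randomized_riemann_sum_holder_general hT.le (Nat.one_le_iff_ne_zero.mp hN) hL hα.1 hf
    (fun j => ⟨(hξmeas j).aemeasurable, hξunif j⟩) fun _ _ hij => hξindep.indepFun hij
end

section
/- Let H be a separable real Hilbert space, let T > 0 and N ∈ ℕ with N ≥ 1, set Δt := T/N and t_j := j·Δt, and let f : [0, T] → H be Bochner measurable with ∫_0^T ‖f(τ)‖² dτ < ∞. Let ξ_1, …, ξ_N be independent random variables on a probability space (Ω, F, P), each uniformly distributed on [0, 1]. Then E[‖∑_{j=1}^{N} Δt · f(t_{j−1} + ξ_j Δt) − ∫_0^T f(τ) dτ‖²] ≤ Δt · ∫_0^T ‖f(τ)‖² dτ. -/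
open MeasureTheory ProbabilityTheory

/-!
The `j`-th summand of the randomized Riemann sum is an unbiased estimator of the integral of `f`
over the `j`-th subinterval, so the quadrature error is a sum of centred independent random
vectors. Independent centred vectors are orthogonal in `L²`, hence the mean-square error is the sum
of the variances of the summands, and each variance is a second moment minus the square of a mean.
The second moments add up to `Δt ∫ ‖f‖²`.
-/

open AffineMap (lineMap)
open Set (uIcc uIoc Icc)

section SecondMoments

variable {α E : Type*} {mα : MeasurableSpace α} {μ : Measure α}

theorem integrable_inner_of_memLp_two {𝕜 : Type*} [RCLike 𝕜] [NormedAddCommGroup E]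
    [InnerProductSpace 𝕜 E] {X Y : α → E} (hX : MemLp X 2 μ) (hY : MemLp Y 2 μ) :
    Integrable (fun a => inner 𝕜 (X a) (Y a)) μ := by
  refine (L2.integrable_inner (hX.toLp X) (hY.toLp Y)).congr ?_
  filter_upwards [hX.coeFn_toLp, hY.coeFn_toLp] with a hXa hYa
  rw [hXa, hYa]

variable [NormedAddCommGroup E] [InnerProductSpace ℝ E]

theorem integral_norm_sq_sum_of_pairwise_integral_inner_eq_zero {ι : Type*} {s : Finset ι}
    {X : ι → α → E} (hX : ∀ i ∈ s, MemLp (X i) 2 μ)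
    (horth : (s : Set ι).Pairwise fun i j => ∫ a, inner ℝ (X i a) (X j a) ∂μ = 0) :
    ∫ a, ‖∑ i ∈ s, X i a‖ ^ 2 ∂μ = ∑ i ∈ s, ∫ a, ‖X i a‖ ^ 2 ∂μ := by
  have hint : ∀ i ∈ s, ∀ j ∈ s, Integrable (fun a => inner ℝ (X i a) (X j a)) μ :=
    fun i hi j hj => integrable_inner_of_memLp_two (hX i hi) (hX j hj)
  calc ∫ a, ‖∑ i ∈ s, X i a‖ ^ 2 ∂μ
      = ∫ a, ∑ i ∈ s, ∑ j ∈ s, inner ℝ (X i a) (X j a) ∂μ := by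
        simp_rw [← real_inner_self_eq_norm_sq, sum_inner, inner_sum]
    _ = ∑ i ∈ s, ∑ j ∈ s, ∫ a, inner ℝ (X i a) (X j a) ∂μ := by
        rw [integral_finsetSum _ fun i hi => integrable_finsetSum _ (hint i hi)]
        exact Finset.sum_congr rfl fun i hi => integral_finsetSum _ (hint i hi)
    _ = ∑ i ∈ s, ∫ a, ‖X i a‖ ^ 2 ∂μ := by
        refine Finset.sum_congr rfl fun i hi => ?_
        rw [Finset.sum_eq_single_of_mem i hi fun j hj hji => horth hi hj hji.symm]
        simp_rw [real_inner_self_eq_norm_sq]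

variable [CompleteSpace E] [IsProbabilityMeasure μ]

theorem integral_norm_sq_sub_integral {X : α → E} (hX : MemLp X 2 μ) :
    ∫ a, ‖X a - ∫ b, X b ∂μ‖ ^ 2 ∂μ = ∫ a, ‖X a‖ ^ 2 ∂μ - ‖∫ a, X a ∂μ‖ ^ 2 := by
  set m := ∫ a, X a ∂μ with hm
  have hint : Integrable X μ := hX.integrable one_le_two
  have hsq : Integrable (fun a => ‖X a‖ ^ 2) μ := hX.integrable_norm_pow two_ne_zero
  have hinner : Integrable (fun a => 2 * inner ℝ m (X a)) μ := (hint.const_inner m).const_mul 2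
  have hdiff : Integrable (fun a => ‖X a‖ ^ 2 - 2 * inner ℝ m (X a)) μ := hsq.sub hinner
  calc ∫ a, ‖X a - m‖ ^ 2 ∂μ
      = ∫ a, (‖X a‖ ^ 2 - 2 * inner ℝ m (X a) + ‖m‖ ^ 2) ∂μ := by
        simp_rw [norm_sub_sq_real, real_inner_comm]
    _ = ∫ a, ‖X a‖ ^ 2 ∂μ - 2 * inner ℝ m m + ‖m‖ ^ 2 := by
        rw [integral_add hdiff (integrable_const _), integral_sub hsq hinner,
          integral_const_mul, integral_inner hint, ← hm, integral_const, probReal_univ, one_smul]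
    _ = ∫ a, ‖X a‖ ^ 2 ∂μ - ‖m‖ ^ 2 := by
        rw [real_inner_self_eq_norm_sq]
        ring

theorem integral_norm_sq_sum_sub_sum_integral_of_pairwise_indepFun [MeasurableSpace E]
    [BorelSpace E] {ι : Type*} {s : Finset ι} {X : ι → α → E} (hX : ∀ i ∈ s, MemLp (X i) 2 μ)
    (hindep : (s : Set ι).Pairwise fun i j => IndepFun (X i) (X j) μ) :
    ∫ a, ‖∑ i ∈ s, X i a - ∑ i ∈ s, ∫ b, X i b ∂μ‖ ^ 2 ∂μ
      = ∑ i ∈ s, (∫ a, ‖X i a‖ ^ 2 ∂μ - ‖∫ a, X i a ∂μ‖ ^ 2) := by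
  have hcentred : ∀ i ∈ s, MemLp (fun a => X i a - ∫ b, X i b ∂μ) 2 μ :=
    fun i hi => (hX i hi).sub (memLp_const _)
  have hmean : ∀ i ∈ s, ∫ a, (X i a - ∫ b, X i b ∂μ) ∂μ = 0 := fun i hi => by
    rw [integral_sub ((hX i hi).integrable one_le_two) (integrable_const _), integral_const,
      probReal_univ, one_smul, sub_self]
  have horth : (s : Set ι).Pairwise fun i j =>
      ∫ a, inner ℝ (X i a - ∫ b, X i b ∂μ) (X j a - ∫ b, X j b ∂μ) ∂μ = 0 := by
    intro i hi j hj hij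
    have hindep' : IndepFun (fun a => X i a - ∫ b, X i b ∂μ) (fun a => X j a - ∫ b, X j b ∂μ) μ :=
      (hindep hi hj hij).comp (φ := (· - ∫ b, X i b ∂μ)) (ψ := (· - ∫ b, X j b ∂μ))
        (measurable_sub_const _) (measurable_sub_const _)
    calc ∫ a, inner ℝ (X i a - ∫ b, X i b ∂μ) (X j a - ∫ b, X j b ∂μ) ∂μ
        = inner ℝ (∫ a, (X i a - ∫ b, X i b ∂μ) ∂μ) (∫ a, (X j a - ∫ b, X j b ∂μ) ∂μ) :=
          hindep'.integral_bilin ((hcentred i hi).integrable one_le_two)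
            ((hcentred j hj).integrable one_le_two) (innerSL ℝ)
      _ = 0 := by rw [hmean i hi, inner_zero_left]
  simp_rw [← Finset.sum_sub_distrib]
  rw [integral_norm_sq_sum_of_pairwise_integral_inner_eq_zero hcentred horth]
  exact Finset.sum_congr rfl fun i hi => integral_norm_sq_sub_integral (hX i hi)

end SecondMoments

section UniformNode

variable {Ω E : Type*} {mΩ : MeasurableSpace Ω} {P : Measure Ω} [NormedAddCommGroup E]
  {f : ℝ → E} {a b : ℝ} {U : Ω → ℝ}

theorem integrableOn_comp_lineMap (hf : IntervalIntegrable f volume a b) :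
    IntegrableOn (fun x => f (lineMap a b x)) (Icc (0 : ℝ) 1) := by
  rw [← intervalIntegrable_iff_integrableOn_Icc_of_le zero_le_one]
  rcases eq_or_ne a b with rfl | hab
  · simp only [AffineMap.lineMap_same_apply, intervalIntegrable_const]
  · have hscaled := (hf.comp_add_right a).comp_mul_right (c := b - a)
    simpa only [AffineMap.lineMap_apply_ring', sub_self, zero_div,
      div_self (sub_ne_zero.2 hab.symm)] using hscaled

theorem integrable_comp_lineMap_uniform (hU : HasLaw U (volume.restrict (Icc 0 1)) P)
    (hf : IntervalIntegrable f volume a b) : Integrable (fun ω => f (lineMap a b (U ω))) P := by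
  have hcomp : Integrable (fun x => f (lineMap a b x)) (P.map U) := by
    rw [hU.map_eq]
    exact integrableOn_comp_lineMap hf
  exact hcomp.comp_aemeasurable hU.aemeasurable

theorem sub_smul_integral_comp_lineMap_uniform [NormedSpace ℝ E]
    (hU : HasLaw U (volume.restrict (Icc 0 1)) P) (hf : IntervalIntegrable f volume a b) :
    (b - a) • ∫ ω, f (lineMap a b (U ω)) ∂P = ∫ x in a..b, f x := by
  calc (b - a) • ∫ ω, f (lineMap a b (U ω)) ∂P
      = (b - a) • ∫ x in (0 : ℝ)..1, f ((b - a) * x + a) := by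
        rw [intervalIntegral.integral_of_le zero_le_one, ← integral_Icc_eq_integral_Ioc]
        simp_rw [mul_comm (b - a), ← AffineMap.lineMap_apply_ring']
        exact congrArg _ (hU.integral_comp (integrableOn_comp_lineMap hf).aestronglyMeasurable)
    _ = ∫ x in a..b, f x := by
        rw [intervalIntegral.smul_integral_comp_mul_add, mul_zero, zero_add, mul_one,
          sub_add_cancel]

theorem intervalIntegrable_of_memLp_two (hf : MemLp f 2 (volume.restrict (uIoc a b))) :
    IntervalIntegrable f volume a b := by
  have : IsFiniteMeasure (volume.restrict (uIoc a b)) := by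
    rw [uIoc]
    infer_instance
  exact intervalIntegrable_iff.2 (hf.integrable one_le_two)

theorem intervalIntegrable_norm_sq_of_memLp_two (hf : MemLp f 2 (volume.restrict (uIoc a b))) :
    IntervalIntegrable (fun x => ‖f x‖ ^ 2) volume a b :=
  intervalIntegrable_iff.2 (hf.integrable_norm_pow two_ne_zero)

theorem memLp_two_comp_lineMap_uniform (hU : HasLaw U (volume.restrict (Icc 0 1)) P)
    (hf : MemLp f 2 (volume.restrict (uIoc a b))) :
    MemLp (fun ω => f (lineMap a b (U ω))) 2 P :=
  (memLp_two_iff_integrable_sq_norm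
    (integrable_comp_lineMap_uniform hU
      (intervalIntegrable_of_memLp_two hf)).aestronglyMeasurable).2
    (integrable_comp_lineMap_uniform hU (intervalIntegrable_norm_sq_of_memLp_two hf))

theorem integral_norm_sq_sub_smul_comp_lineMap_uniform [NormedSpace ℝ E]
    (hU : HasLaw U (volume.restrict (Icc 0 1)) P)
    (hf : MemLp f 2 (volume.restrict (uIoc a b))) :
    ∫ ω, ‖(b - a) • f (lineMap a b (U ω))‖ ^ 2 ∂P = (b - a) * ∫ x in a..b, ‖f x‖ ^ 2 := by
  rw [← sub_smul_integral_comp_lineMap_uniform hU (intervalIntegrable_norm_sq_of_memLp_two hf)]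
  simp_rw [norm_smul, mul_pow, Real.norm_eq_abs, sq_abs]
  rw [integral_const_mul, smul_eq_mul, sq, mul_assoc]

theorem indepFun_smul_comp_lineMap_uniform [NormedSpace ℝ E] [MeasurableSpace E] [BorelSpace E]
    {V : Ω → ℝ} {c d : ℝ} (hUV : IndepFun U V P) (hU : HasLaw U (volume.restrict (Icc 0 1)) P)
    (hV : HasLaw V (volume.restrict (Icc 0 1)) P) (hab : IntervalIntegrable f volume a b)
    (hcd : IntervalIntegrable f volume c d) :
    IndepFun (fun ω => (b - a) • f (lineMap a b (U ω)))
      (fun ω => (d - c) • f (lineMap c d (V ω))) P := by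
  have hmeas (u v : ℝ) (huv : IntervalIntegrable f volume u v) :
      AEMeasurable (fun x : ℝ => (v - u) • f (lineMap u v x)) (volume.restrict (Icc 0 1)) :=
    ((integrableOn_comp_lineMap huv).aestronglyMeasurable.const_smul _).aemeasurable
  exact hUV.comp₀ hU.aemeasurable hV.aemeasurable (hU.map_eq.symm ▸ hmeas a b hab)
    (hV.map_eq.symm ▸ hmeas c d hcd)

end UniformNode

section RandomizedRiemannSum

variable {Ω H : Type*} {mΩ : MeasurableSpace Ω} {P : Measure Ω} [IsProbabilityMeasure P]
  [NormedAddCommGroup H] [InnerProductSpace ℝ H] [CompleteSpace H] {f : ℝ → H} {N : ℕ}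
  {ξ : Fin N → Ω → ℝ}

theorem integral_norm_sq_randomized_riemann_sum_sub_integral {t : ℕ → ℝ}
    (hf : ∀ j < N, MemLp f 2 (volume.restrict (uIoc (t j) (t (j + 1)))))
    (hξ : Pairwise fun i j => IndepFun (ξ i) (ξ j) P)
    (hξunif : ∀ j, HasLaw (ξ j) (volume.restrict (Icc 0 1)) P) :
    ∫ ω, ‖∑ j : Fin N, (t (j + 1) - t j) • f (lineMap (t j) (t (j + 1)) (ξ j ω))
        - ∫ x in t 0..t N, f x‖ ^ 2 ∂P
      = ∑ j : Fin N, ((t (j + 1) - t j) * ∫ x in t j..t (j + 1), ‖f x‖ ^ 2)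
        - ∑ j : Fin N, ‖∫ x in t j..t (j + 1), f x‖ ^ 2 := by
  borelize H
  have hfint : ∀ j < N, IntervalIntegrable f volume (t j) (t (j + 1)) :=
    fun j hj => intervalIntegrable_of_memLp_two (hf j hj)
  have hmean : ∀ j : Fin N, ∫ ω, (t (j + 1) - t j) • f (lineMap (t j) (t (j + 1)) (ξ j ω)) ∂P
      = ∫ x in t j..t (j + 1), f x := fun j => by
    rw [integral_smul, sub_smul_integral_comp_lineMap_uniform (hξunif j) (hfint j j.2)]
  have hsum : ∑ j : Fin N, ∫ x in t j..t (j + 1), f x = ∫ x in t 0..t N, f x := by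
    rw [← intervalIntegral.sum_integral_adjacent_intervals hfint, Finset.sum_range]
  have hvar := integral_norm_sq_sum_sub_sum_integral_of_pairwise_indepFun (s := Finset.univ)
    (fun j _ => (memLp_two_comp_lineMap_uniform (hξunif j) (hf j j.2)).const_smul
      (t (j + 1) - t j))
    (fun i _ j _ hij => indepFun_smul_comp_lineMap_uniform (hξ hij) (hξunif i) (hξunif j)
      (hfint i i.2) (hfint j j.2))
  simp only [Pi.smul_apply, hmean, hsum, Finset.sum_sub_distrib,
    fun j : Fin N => integral_norm_sq_sub_smul_comp_lineMap_uniform (hξunif j) (hf j j.2)] at hvar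
  exact hvar

theorem uIoc_natCast_mul_subset (h : ℝ) {j N : ℕ} (hj : j < N) :
    uIoc (j * h) ((j + 1 : ℕ) * h) ⊆ uIoc 0 (N * h) := by
  have hmem : ∀ k ≤ N, (k * h : ℝ) ∈ uIcc 0 (N * h) := fun k hk => by
    have hk' : (k : ℝ) ≤ N := Nat.cast_le.2 hk
    rcases le_total 0 h with hh | hh
    · exact Set.mem_uIcc_of_le (by positivity) (mul_le_mul_of_nonneg_right hk' hh)
    · exact Set.mem_uIcc_of_ge (mul_le_mul_of_nonpos_right hk' hh)
        (mul_nonpos_of_nonneg_of_nonpos k.cast_nonneg hh)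
  exact Set.uIoc_subset_uIoc_of_uIcc_subset_uIcc
    (Set.uIcc_subset_uIcc (hmem j hj.le) (hmem (j + 1) hj))

theorem randomized_riemann_sum_variance_general {T : ℝ} (hN : N ≠ 0)
    (hf : MemLp f 2 (volume.restrict (uIoc 0 T)))
    (hξ : Pairwise fun i j => IndepFun (ξ i) (ξ j) P)
    (hξunif : ∀ j, HasLaw (ξ j) (volume.restrict (Icc 0 1)) P) :
    ∫ ω, ‖(∑ j : Fin N, (T / N) • f ((j : ℝ) * (T / N) + ξ j ω * (T / N)))
        - ∫ τ in (0 : ℝ)..T, f τ‖ ^ 2 ∂P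
      = (T / N) * (∫ τ in (0 : ℝ)..T, ‖f τ‖ ^ 2)
        - ∑ j : Fin N, ‖∫ τ in (j * (T / N))..((j + 1) * (T / N)), f τ‖ ^ 2 := by
  obtain ⟨h, rfl⟩ : ∃ h, T = N * h := ⟨T / N, by field_simp⟩
  rw [mul_div_cancel_left₀ h (Nat.cast_ne_zero.2 hN)]
  have hfsub : ∀ j < N, MemLp f 2 (volume.restrict (uIoc (j * h) ((j + 1 : ℕ) * h))) :=
    fun j hj => hf.mono_measure (Measure.restrict_mono_set _ (uIoc_natCast_mul_subset h hj))
  have hsum : ∑ j : Fin N, ∫ τ in (j * h)..((j + 1 : ℕ) * h), ‖f τ‖ ^ 2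
      = ∫ τ in (0 : ℝ)..N * h, ‖f τ‖ ^ 2 := by
    have hadj := intervalIntegral.sum_integral_adjacent_intervals (a := fun k : ℕ => k * h)
      fun j hj => intervalIntegrable_norm_sq_of_memLp_two (hfsub j hj)
    simpa only [Finset.sum_range, Nat.cast_zero, zero_mul] using hadj
  have hvar := integral_norm_sq_randomized_riemann_sum_sub_integral hfsub hξ hξunif
  have hstep : ∀ j : ℕ, ((j + 1 : ℕ) * h - j * h : ℝ) = h := fun j => by push_cast; ring
  simp only [AffineMap.lineMap_apply_ring', hstep, ← Finset.mul_sum, hsum, Nat.cast_zero,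
    zero_mul] at hvar
  simpa only [add_comm, Nat.cast_add_one] using hvar

end RandomizedRiemannSum

/-- Basic L²-variance bound for the randomized Riemann sum with independent
uniform nodes: the mean-square quadrature error is at most `Δt ∫₀^T ‖f(τ)‖² dτ`. -/
theorem randomized_riemann_sum_variance
    {Ω H : Type*} {mΩ : MeasurableSpace Ω} (P : Measure Ω) [IsProbabilityMeasure P]
    [NormedAddCommGroup H] [InnerProductSpace ℝ H] [CompleteSpace H]
    [SecondCountableTopology H]
    (T : ℝ) (hT : 0 < T) (N : ℕ) (hN : 1 ≤ N)
    (f : ℝ → H) (hfmeas : StronglyMeasurable f)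
    (hfL2 : IntervalIntegrable (fun τ => ‖f τ‖ ^ 2) volume 0 T)
    (ξ : Fin N → Ω → ℝ) (hξmeas : ∀ j, Measurable (ξ j))
    (hξindep : iIndepFun ξ P)
    (hξunif : ∀ j, Measure.map (ξ j) P = (volume : Measure ℝ).restrict (Set.Icc 0 1)) :
    ∫ ω, ‖(∑ j : Fin N, (T / N) • f ((j : ℝ) * (T / N) + ξ j ω * (T / N)))
        - ∫ τ in (0:ℝ)..T, f τ‖ ^ 2 ∂P
      ≤ (T / N) * ∫ τ in (0:ℝ)..T, ‖f τ‖ ^ 2 := by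
  have hf : MemLp f 2 (volume.restrict (uIoc 0 T)) :=
    (memLp_two_iff_integrable_sq_norm hfmeas.aestronglyMeasurable).2 (intervalIntegrable_iff.1 hfL2)
  rw [randomized_riemann_sum_variance_general (Nat.one_le_iff_ne_zero.1 hN) hf
    (fun _ _ hij => hξindep.indepFun hij) fun j => ⟨(hξmeas j).aemeasurable, hξunif j⟩]
  exact sub_le_self _ (Finset.sum_nonneg fun _ _ => sq_nonneg _)
end
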